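/- arXiv:1203.4066 — 2 statements merged into one kernel-verified Lean document; each statement's English description precedes it below -/
import Mathlib

section
/- Let p be a prime and suppose the sequence 𝔖_p(n) of last non-zero digits of n^n in base p is eventually periodic with least eventual period T. Then p does not divide T. -/
/-- The last non-zero digit of `n` in base `b`: if `n = b^r * n'` with `b ∤ n'`,
this is `n' % b`. -/
def lastNonzeroDigit (b n : ℕ) : ℕ := (n / b ^ (Nat.maxPowDiv b n)) % b

/-- `𝔖_b(n)`: the last non-zero digit of `n^n` in base `b`. -/
def lnz (b n : ℕ) : ℕ := lastNonzeroDigit b (n ^ n)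

/-!
By Fermat's little theorem, raising to the `p`-th power fixes the last non-zero digit in base `p`.
As `(p * n) ^ (p * n) = p ^ (p * n) * (n ^ n) ^ p`, the sequence `𝔖_p` is therefore invariant under
`n ↦ p * n`, so an eventual period `p * t` yields the smaller eventual period `t`.
-/

open Filter

theorem lastNonzeroDigit_eq_divMaxPow_mod (b n : ℕ) :
    lastNonzeroDigit b n = n.divMaxPow b % b := by
  have hpos : 0 < b ^ padicValNat b n := by
    obtain rfl | hb := b.eq_zero_or_pos
    · simp
    · exact pow_pos hb _
  exact congrArg (· % b)
    (Nat.div_eq_of_eq_mul_left hpos (Nat.divMaxPow_mul_pow_padicValNat b n).symm)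

theorem lastNonzeroDigit_of_not_dvd {b n : ℕ} (h : ¬ b ∣ n) : lastNonzeroDigit b n = n % b := by
  rw [lastNonzeroDigit_eq_divMaxPow_mod, Nat.divMaxPow, Nat.maxPowDvdDiv_of_not_dvd h]

theorem lastNonzeroDigit_base_pow_mul {b : ℕ} (hb : b ≠ 0) (r n : ℕ) :
    lastNonzeroDigit b (b ^ r * n) = lastNonzeroDigit b n := by
  simp only [lastNonzeroDigit_eq_divMaxPow_mod, Nat.divMaxPow_base_pow_mul hb]

theorem lastNonzeroDigit_pow {b k : ℕ} (hb : 1 < b) (hk : ∀ a : ℕ, a ^ k ≡ a [MOD b]) (n : ℕ) :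
    lastNonzeroDigit b (n ^ k) = lastNonzeroDigit b n := by
  obtain rfl | hn := eq_or_ne n 0
  · have hk0 : k ≠ 0 := by
      rintro rfl
      exact hb.ne' (Nat.dvd_one.mp (Nat.modEq_zero_iff_dvd.mp (hk 0)))
    rw [zero_pow hk0]
  obtain ⟨r, u, hu, rfl⟩ := Nat.exists_eq_pow_mul_and_not_dvd hn b hb.ne'
  have huk : ¬ b ∣ u ^ k := mt ((hk u).dvd_iff dvd_rfl).mp hu
  rw [mul_pow, ← pow_mul, lastNonzeroDigit_base_pow_mul hb.ne_bot,
    lastNonzeroDigit_base_pow_mul hb.ne_bot, lastNonzeroDigit_of_not_dvd huk,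
    lastNonzeroDigit_of_not_dvd hu]
  exact hk u

theorem lnz_base_mul {b : ℕ} (hb : 1 < b) (hfermat : ∀ a : ℕ, a ^ b ≡ a [MOD b]) (n : ℕ) :
    lnz b (b * n) = lnz b n := by
  have hsplit : (b * n) ^ (b * n) = b ^ (b * n) * (n ^ n) ^ b := by
    rw [mul_pow, mul_comm b n, pow_mul n]
  rw [lnz, hsplit, lastNonzeroDigit_base_pow_mul hb.ne_bot, lastNonzeroDigit_pow hb hfermat, lnz]

theorem eventually_add_eq_of_eventually_add_mul_eq {α : Type*} {f : ℕ → α} {b t : ℕ} (hb : 0 < b)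
    (hf : ∀ᶠ n in atTop, f (b * n) = f n) (hper : ∀ᶠ n in atTop, f (n + b * t) = f n) :
    ∀ᶠ n in atTop, f (n + t) = f n := by
  have hmul : Tendsto (b * ·) atTop atTop := tendsto_id.const_mul_atTop' hb
  filter_upwards [hf, (tendsto_add_atTop_nat t).eventually hf, hmul.eventually hper]
    with n hn hnt hbn
  calc f (n + t) = f (b * (n + t)) := hnt.symm
    _ = f (b * n + b * t) := by rw [mul_add]
    _ = f (b * n) := hbn
    _ = f n := hn

/-- The bases satisfying `hfermat` are the primes and the Carmichael numbers. -/
theorem stmt_9_general (b : ℕ) (hb : 1 < b) (hfermat : ∀ a : ℕ, a ^ b ≡ a [MOD b])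
    (T : ℕ) (hT : 0 < T)
    (hper : ∃ n₀ : ℕ, ∀ n ≥ n₀, lnz b (n + T) = lnz b n)
    (hleast : ∀ T' : ℕ, 0 < T' →
      (∃ n₀ : ℕ, ∀ n ≥ n₀, lnz b (n + T') = lnz b n) → T ≤ T') :
    ¬ b ∣ T := by
  rintro ⟨t, rfl⟩
  have ht : 0 < t := Nat.pos_of_mul_pos_left hT
  have hper_t : ∀ᶠ n in atTop, lnz b (n + t) = lnz b n :=
    eventually_add_eq_of_eventually_add_mul_eq hb.pos (.of_forall (lnz_base_mul hb hfermat))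
      (eventually_atTop.mpr hper)
  exact (hleast t ht (eventually_atTop.mp hper_t)).not_gt (lt_mul_of_one_lt_left ht hb)

theorem stmt_9 (p : ℕ) (hp : p.Prime) (T : ℕ) (hT : 0 < T)
    (hper : ∃ n₀ : ℕ, ∀ n ≥ n₀, lnz p (n + T) = lnz p n)
    (hleast : ∀ T' : ℕ, 0 < T' →
      (∃ n₀ : ℕ, ∀ n ≥ n₀, lnz p (n + T') = lnz p n) → T ≤ T') :
    ¬ p ∣ T :=
  stmt_9_general p hp.one_lt
    (fun a ↦ Int.natCast_modEq_iff.mp <| mod_cast Int.ModEq.pow_prime_eq_self hp a) T hT hper hleast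
end

section
/- Let p be an odd prime, t > 1 an integer with t = p^s a power of p, and define S(n) = 𝔖_{p^t}(p^t·n). Then the sequence S is not eventually periodic. -/
/-!
Let `m` be prime to `p` and `n = p ^ (t * k) * m`. The exponent of `p` in `n ^ n` is a multiple of
`t`, so the last nonzero digit of `n ^ n` in base `p ^ t` is congruent modulo `p` to `m ^ n`, hence
to `m ^ m` by Fermat.

If the digits along the multiples of `p ^ a` are eventually periodic, then they have an eventual
period of the form `D = p ^ (t * e) * q` with `p ∤ q`. Adding `D` to `n = p ^ (t * (e + g)) * u`,
where `g ≥ 1` and `p ∤ u`, turns the residue `u ^ u` of the digit into `q ^ (u + q)`. The latter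
depends only on `u` modulo `p - 1`, but the former does not: `u = 1` and `u = 2 * p - 1` give `1`
and `-1`.
-/

theorem lastNonzeroDigit_pow_mul {b m : ℕ} (hb : 1 < b) (hm : ¬ b ∣ m) (r : ℕ) :
    lastNonzeroDigit b (b ^ r * m) = m % b := by
  have hm₀ : m ≠ 0 := fun h ↦ hm (h ▸ dvd_zero b)
  have hval : padicValNat b (b ^ r * m) = r := by
    rw [padicValNat_base_pow_mul hb hm₀, padicValNat.eq_zero_of_not_dvd hm, zero_add]
  calc lastNonzeroDigit b (b ^ r * m) = b ^ r * m / b ^ padicValNat b (b ^ r * m) % b := rfl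
    _ = m % b := by rw [hval, Nat.mul_div_cancel_left m (by positivity)]

theorem eventually_periodic_nat_mul {α : Type*} {f : ℕ → α} {T n₀ : ℕ}
    (hf : ∀ n ≥ n₀, f (n + T) = f n) (j : ℕ) : ∀ n ≥ n₀, f (n + j * T) = f n := by
  have hper : Function.Periodic (fun i ↦ f (n₀ + i)) T := fun i ↦ by
    simpa only [add_assoc] using hf (n₀ + i) (n₀.le_add_right i)
  intro n hn
  obtain ⟨i, rfl⟩ := Nat.exists_eq_add_of_le hn
  simpa only [add_assoc, Nat.cast_id] using hper.nat_mul j i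

theorem pow_mul_modEq_sub_one {b : ℕ} (hb : 1 ≤ b) (k m : ℕ) : b ^ k * m ≡ m [MOD b - 1] := by
  have hbase : b ≡ 1 [MOD b - 1] := ((Nat.modEq_iff_dvd' hb).2 dvd_rfl).symm
  simpa only [one_pow, one_mul] using (hbase.pow k).mul_right m

section PrimePowerBase

variable {p : ℕ} [Fact p.Prime]

theorem natCast_pow_eq_of_modEq {m i j : ℕ} (hm : ¬ p ∣ m) (hij : i ≡ j [MOD p - 1]) :
    (m : ZMod p) ^ i = (m : ZMod p) ^ j :=
  pow_eq_pow_of_modEq hij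
    (ZMod.pow_card_sub_one_eq_one (mt (ZMod.natCast_eq_zero_iff m p).1 hm))

theorem natCast_lnz_pow_mul {t m : ℕ} (ht : t ≠ 0) (hm : ¬ p ∣ m) (k : ℕ) :
    (lnz (p ^ t) (p ^ (t * k) * m) : ZMod p) = (m : ZMod p) ^ m := by
  have hp : p.Prime := Fact.out
  set n := p ^ (t * k) * m with hn
  have hpow : n ^ n = (p ^ t) ^ (k * n) * m ^ n := by
    rw [pow_mul (p ^ t), ← pow_mul p, ← mul_pow, ← hn]
  have hdvd : ¬ p ^ t ∣ m ^ n := fun h ↦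
    hm (hp.dvd_of_dvd_pow ((dvd_pow_self p ht).trans h))
  have hdigit : lnz (p ^ t) n ≡ m ^ n [MOD p] := by
    rw [lnz, hpow, lastNonzeroDigit_pow_mul (Nat.one_lt_pow ht hp.one_lt) hdvd]
    exact (Nat.mod_modEq _ _).of_dvd (dvd_pow_self p ht)
  calc (lnz (p ^ t) n : ZMod p) = (m : ZMod p) ^ n := by
        simpa only [Nat.cast_pow] using (ZMod.natCast_eq_natCast_iff _ _ _).2 hdigit
    _ = (m : ZMod p) ^ m := natCast_pow_eq_of_modEq hm (pow_mul_modEq_sub_one hp.one_le _ _)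

theorem natCast_lnz_pow_mul_add {t g q : ℕ} (ht : t ≠ 0) (hg : g ≠ 0) (hq : ¬ p ∣ q) (e u : ℕ) :
    (lnz (p ^ t) (p ^ (t * (e + g)) * u + p ^ (t * e) * q) : ZMod p) = (q : ZMod p) ^ (u + q) := by
  set m := p ^ (t * g) * u + q with hm
  have hfactor : p ^ (t * (e + g)) * u + p ^ (t * e) * q = p ^ (t * e) * m := by
    rw [hm]
    ring
  have hdvd : p ∣ p ^ (t * g) * u :=
    (dvd_pow_self p (mul_ne_zero ht hg)).mul_right u
  have hcast : (m : ZMod p) = q := by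
    rw [hm, Nat.cast_add, (ZMod.natCast_eq_zero_iff _ p).2 hdvd, zero_add]
  rw [hfactor, natCast_lnz_pow_mul ht ((Nat.dvd_add_right hdvd).not.2 hq), hcast]
  have hmod : m ≡ u + q [MOD p - 1] :=
    (pow_mul_modEq_sub_one (Fact.out : p.Prime).one_le _ u).add_right q
  exact natCast_pow_eq_of_modEq hq hmod

theorem exists_lnz_pow_mul_add_ne {t g q : ℕ} (hodd : Odd p) (ht : t ≠ 0) (hg : g ≠ 0)
    (hq : ¬ p ∣ q) (e : ℕ) :
    ∃ u ≠ 0, lnz (p ^ t) (p ^ (t * (e + g)) * u + p ^ (t * e) * q) ≠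
      lnz (p ^ t) (p ^ (t * (e + g)) * u) := by
  have hp : p.Prime := Fact.out
  have : Fact (2 < p) := ⟨hp.two_le.lt_of_ne' (by rintro rfl; exact absurd hodd (by decide))⟩
  by_contra! hlnz
  have hself (u : ℕ) (hu : ¬ p ∣ u) : (u : ZMod p) ^ u = (q : ZMod p) ^ (u + q) := by
    have hu₀ : u ≠ 0 := fun h ↦ hu (h ▸ dvd_zero p)
    rw [← natCast_lnz_pow_mul ht hu (e + g), ← hlnz u hu₀, natCast_lnz_pow_mul_add ht hg hq]
  let v := 2 * (p - 1) + 1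
  have hv : (v : ZMod p) = -1 := by
    simp only [v]
    push_cast [hp.one_le]
    rw [CharP.cast_eq_zero]
    ring
  have hvdvd : ¬ p ∣ v := by
    rw [← ZMod.natCast_eq_zero_iff, hv]
    exact neg_ne_zero.2 one_ne_zero
  have hvmod : v ≡ 1 [MOD p - 1] := by simp [v, Nat.ModEq]
  apply ZMod.neg_one_ne_one (n := p)
  calc (-1 : ZMod p) = (v : ZMod p) ^ v := by rw [hv, (odd_two_mul_add_one (p - 1)).neg_one_pow]
    _ = (q : ZMod p) ^ (v + q) := hself v hvdvd
    _ = (q : ZMod p) ^ (1 + q) := natCast_pow_eq_of_modEq hq (hvmod.add_right q)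
    _ = ((1 : ℕ) : ZMod p) ^ 1 := (hself 1 hp.not_dvd_one).symm
    _ = 1 := by simp

end PrimePowerBase

theorem stmt_16_general {p t : ℕ} (a : ℕ) (hp : p.Prime) (hodd : Odd p) (ht : t ≠ 0) :
    ¬ ∃ T : ℕ, 0 < T ∧ ∃ n₀ : ℕ, ∀ n ≥ n₀,
      lnz (p ^ t) (p ^ a * (n + T)) = lnz (p ^ t) (p ^ a * n) := by
  rintro ⟨T, hT, n₀, hper⟩
  have : Fact p.Prime := ⟨hp⟩
  obtain ⟨c, q, hq, rfl⟩ := Nat.exists_eq_pow_mul_and_not_dvd hT.ne' p hp.ne_one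
  obtain ⟨d, hd⟩ : ∃ d, t * (a + c) = a + c + d :=
    Nat.exists_eq_add_of_le (Nat.le_mul_of_pos_left _ ht.pos)
  obtain ⟨l, hl⟩ : ∃ l, t * (a + c + (n₀ + 1)) = a + n₀ + l :=
    Nat.exists_eq_add_of_le <|
      (show a + n₀ ≤ a + c + (n₀ + 1) by omega).trans (Nat.le_mul_of_pos_left _ ht.pos)
  obtain ⟨u, hu, hne⟩ := exists_lnz_pow_mul_add_ne hodd ht n₀.succ_ne_zero hq (a + c)
  have hlarge : n₀ ≤ p ^ (n₀ + l) * u :=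
    calc n₀ ≤ n₀ + l := n₀.le_add_right l
      _ ≤ p ^ (n₀ + l) := (Nat.lt_pow_self hp.one_lt).le
      _ ≤ p ^ (n₀ + l) * u := Nat.le_mul_of_pos_right _ hu.pos
  have hbase : p ^ (t * (a + c + (n₀ + 1))) * u = p ^ a * (p ^ (n₀ + l) * u) := by
    rw [hl]
    ring
  have hperiod : p ^ (t * (a + c)) * q = p ^ a * (p ^ d * (p ^ c * q)) := by
    rw [hd]
    ring
  apply hne
  rw [hbase, hperiod, ← mul_add]
  exact eventually_periodic_nat_mul (f := fun n ↦ lnz (p ^ t) (p ^ a * n)) hper (p ^ d) _ hlarge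

theorem stmt_16 (p t s : ℕ) (hp : p.Prime) (hodd : Odd p) (ht : 1 < t)
    (hts : t = p ^ s) :
    ¬ ∃ T : ℕ, 0 < T ∧ ∃ n₀ : ℕ, ∀ n ≥ n₀,
      lnz (p ^ t) (p ^ t * (n + T)) = lnz (p ^ t) (p ^ t * n) := by
  exact stmt_16_general t hp hodd (by omega)
end
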